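/- Fix real α, β > −1, j ∈ ℕ with j ≥ 1, γ ∈ ℝ, M > 0, and a sequence M_n ≥ 0 with lim_{n→∞} M_n n^γ = M. If γ < 2(α+2j+1), then the largest real zero y_{n,1} of Q_n satisfies lim_{n→∞} y_{n,1} = 1. -/

import Mathlib

open Polynomial Filter

/-- The Jacobi polynomial `P_n^{(α,β)}` as a real polynomial. -/
noncomputable def jacobiP (α β : ℝ) (n : ℕ) : Polynomial ℝ :=
  ∑ k ∈ Finset.range (n + 1),
    Polynomial.C (Real.Gamma (n + α + 1) / (Real.Gamma ((n : ℝ) - k + 1) * Real.Gamma (α + k + 1)) *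
        (Real.Gamma (n + β + 1) / (Real.Gamma ((k : ℝ) + 1) * Real.Gamma ((n : ℝ) - k + β + 1)))) *
      (Polynomial.C (2⁻¹ : ℝ) * (Polynomial.X - 1)) ^ k *
      (Polynomial.C (2⁻¹ : ℝ) * (Polynomial.X + 1)) ^ (n - k)

/-- The squared Jacobi norm `‖P_n^{(α,β)}‖²`. -/
noncomputable def jacobiNormSq (α β : ℝ) (n : ℕ) : ℝ :=
  ∫ x in (-1 : ℝ)..1, (jacobiP α β n).eval x ^ 2 * (1 - x) ^ α * (1 + x) ^ β

/-- The kernel `K_n^{(j,k)}(x,y)`. -/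
noncomputable def kernK (α β : ℝ) (j k n : ℕ) (x y : ℝ) : ℝ :=
  ∑ i ∈ Finset.range (n + 1),
    (Polynomial.derivative^[j] (jacobiP α β i)).eval x *
      (Polynomial.derivative^[k] (jacobiP α β i)).eval y / jacobiNormSq α β i

/-- The kernel `K_n^{(j,0)}(1,·)` as a polynomial. -/
noncomputable def kernKPoly (α β : ℝ) (j n : ℕ) : Polynomial ℝ :=
  ∑ i ∈ Finset.range (n + 1),
    Polynomial.C ((Polynomial.derivative^[j] (jacobiP α β i)).eval 1 / jacobiNormSq α β i) *
      jacobiP α β i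

/-- The varying Sobolev inner product `(f,g)_{S,n}` with mass `m`. -/
noncomputable def sobInner (α β : ℝ) (j : ℕ) (m : ℝ) (f g : Polynomial ℝ) : ℝ :=
  (∫ x in (-1 : ℝ)..1, f.eval x * g.eval x * (1 - x) ^ α * (1 + x) ^ β) +
    m * (Polynomial.derivative^[j] f).eval 1 * (Polynomial.derivative^[j] g).eval 1

/-- The Jacobi–Sobolev orthogonal polynomial `Q_n`. -/
noncomputable def sobQ (α β : ℝ) (j : ℕ) (Ms : ℕ → ℝ) (n : ℕ) : Polynomial ℝ :=
  jacobiP α β n -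
    Polynomial.C (Ms n * (Polynomial.derivative^[j] (jacobiP α β n)).eval 1 /
        (1 + Ms n * kernK α β j j (n - 1) 1 1)) *
      kernKPoly α β j (n - 1)

/-!
`Q_n` is orthogonal, for the Sobolev form `∫ f g w + M_n f⁽ʲ⁾(1) g⁽ʲ⁾(1)`, to all polynomials of
degree less than `n`, and `Q_n⁽ʲ⁾(1)` is positive, being `P_n⁽ʲ⁾(1)` divided by
`1 + M_n K_{n-1}⁽ʲʲ⁾(1, 1)`. Two bounds, both independent of the mass, squeeze its largest zero.

*From below.* Let `c` be the largest zero of `P_n` and test `Q_n` against the polynomial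
`P_n / (X - c)`, all of whose derivatives at `1` are nonnegative. Gauss quadrature turns the
integral into a positive multiple of `Q_n(c)`, and the mass term is nonnegative, so `Q_n(c) ≤ 0`
and `Q_n` has a zero at or beyond `c`. The Jacobi differential equation at `x = 1` gives the
value of `P_n' / P_n = ∑ 1 / (1 - x_i)` there, hence `c ≥ 1 - 2(α + 1) / (n + α + β + 1)`.

*From above.* The polynomials with `f⁽ʲ⁾(1) = 0` do not see the mass, so `Q_n` has at least
`n - 1` zeros in `(-1, 1)`. If the remaining zero `y` lies to the right of `1`, then the Leibniz
rule for `Q_n = const * (X - y) * ∏ (X - x_i)` shows that `Q_n⁽ʲ⁾(1) > 0` forces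
`y ≤ 1 + 2j / (n - j)`.
-/

section Nodal

open Lagrange

variable {ι R : Type*} [CommRing R]

lemma iterate_derivative_X_sub_C_mul (t : R) (p : R[X]) (k : ℕ) :
    derivative^[k] ((X - C t) * p) = (X - C t) * derivative^[k] p + k • derivative^[k - 1] p := by
  rw [sub_mul, mul_comm X, iterate_derivative_sub, iterate_derivative_mul_X,
    iterate_derivative_C_mul]
  ring

lemma eq_C_leadingCoeff_mul_nodal [IsDomain R] {p : R[X]} {s : Finset R}
    (hdeg : p.natDegree ≤ s.card) (hroot : ∀ t ∈ s, p.IsRoot t) :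
    p = C p.leadingCoeff * nodal s id := by
  rcases eq_or_ne p 0 with rfl | hp
  · simp
  have hle : s.val ≤ p.roots :=
    (Multiset.le_iff_subset s.nodup).2 fun t ht => (mem_roots hp).2 (hroot t ht)
  have hroots : s.val = p.roots :=
    Multiset.eq_of_le_of_card_le hle ((card_roots' p).trans hdeg)
  have hcard : p.roots.card = p.natDegree :=
    (card_roots' p).antisymm (hdeg.trans (Multiset.card_le_card hle))
  calc p = C p.leadingCoeff * (p.roots.map fun t => X - C t).prod :=
        (C_leadingCoeff_mul_prod_multiset_X_sub_C hcard).symm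
    _ = C p.leadingCoeff * nodal s id := by rw [← hroots]; rfl

variable [DecidableEq ι]

lemma iterate_derivative_succ_nodal (s : Finset ι) (v : ι → R) (k : ℕ) :
    derivative^[k + 1] (nodal s v) = ∑ i ∈ s, derivative^[k] (nodal (s.erase i) v) := by
  rw [Function.iterate_succ_apply, derivative_nodal, iterate_derivative_sum]

-- Sum the Leibniz rule for `(X - C (v i)) * nodal (s.erase i) v` over `i`.
lemma card_sub_mul_eval_iterate_derivative_nodal (s : Finset ι) (v : ι → R) (x : R) (k : ℕ) :
    (s.card - k : R) * (derivative^[k] (nodal s v)).eval x =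
      ∑ i ∈ s, (x - v i) * (derivative^[k] (nodal (s.erase i) v)).eval x := by
  have leibniz : ∀ i ∈ s, (derivative^[k] (nodal s v)).eval x =
      (x - v i) * (derivative^[k] (nodal (s.erase i) v)).eval x +
        k * (derivative^[k - 1] (nodal (s.erase i) v)).eval x := by
    intro i hi
    rw [nodal_eq_mul_nodal_erase hi, iterate_derivative_X_sub_C_mul]
    simp
  have lower : (k : R) * ∑ i ∈ s, (derivative^[k - 1] (nodal (s.erase i) v)).eval x =
      k * (derivative^[k] (nodal s v)).eval x := by
    cases k with
    | zero => simp
    | succ k => rw [iterate_derivative_succ_nodal, eval_finsetSum, Nat.add_sub_cancel]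
  have total := Finset.sum_congr rfl leibniz
  rw [Finset.sum_const, Finset.sum_add_distrib, ← Finset.mul_sum, lower, nsmul_eq_mul] at total
  rw [sub_mul, total, add_sub_cancel_right]

end Nodal

section NodalReal

open Lagrange

variable {ι : Type*} {s : Finset ι} {v : ι → ℝ} {x : ℝ}

lemma eval_iterate_derivative_nodal_nonneg (h : ∀ i ∈ s, v i ≤ x) (k : ℕ) :
    0 ≤ (derivative^[k] (nodal s v)).eval x := by
  classical
  induction k generalizing s with
  | zero =>
    rw [Function.iterate_zero_apply, eval_nodal]
    exact Finset.prod_nonneg fun i hi => sub_nonneg.2 (h i hi)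
  | succ k ih =>
    rw [iterate_derivative_succ_nodal, eval_finsetSum]
    exact Finset.sum_nonneg fun i _ => ih fun l hl => h l (Finset.mem_of_mem_erase hl)

lemma eval_iterate_derivative_nodal_pos (h : ∀ i ∈ s, v i < x) {k : ℕ} (hk : k ≤ s.card) :
    0 < (derivative^[k] (nodal s v)).eval x := by
  classical
  induction k generalizing s with
  | zero =>
    rw [Function.iterate_zero_apply, eval_nodal]
    exact Finset.prod_pos fun i hi => sub_pos.2 (h i hi)
  | succ k ih =>
    rw [iterate_derivative_succ_nodal, eval_finsetSum]
    refine Finset.sum_pos (fun i hi => ih (fun l hl => h l (Finset.mem_of_mem_erase hl)) ?_)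
      (Finset.card_pos.1 (by omega))
    rw [Finset.card_erase_of_mem hi]
    omega

lemma card_sub_mul_eval_iterate_derivative_nodal_le {r : ℝ} (h : ∀ i ∈ s, v i ∈ Set.Icc (x - r) x)
    (k : ℕ) :
    (s.card - k) * (derivative^[k] (nodal s v)).eval x ≤
      r * (derivative^[k + 1] (nodal s v)).eval x := by
  classical
  rw [card_sub_mul_eval_iterate_derivative_nodal, iterate_derivative_succ_nodal, eval_finsetSum,
    Finset.mul_sum]
  gcongr with i hi
  · exact eval_iterate_derivative_nodal_nonneg
      (fun l hl => (h l (Finset.mem_of_mem_erase hl)).2) k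
  · linarith [(h i hi).1]

lemma mul_eval_iterate_derivative_nodal_le {δ : ℝ} (hδ : 0 ≤ δ) (h : ∀ i ∈ s, v i ≤ x - δ)
    (k : ℕ) :
    δ * (derivative^[k + 1] (nodal s v)).eval x ≤
      (s.card - k) * (derivative^[k] (nodal s v)).eval x := by
  classical
  rw [card_sub_mul_eval_iterate_derivative_nodal, iterate_derivative_succ_nodal, eval_finsetSum,
    Finset.mul_sum]
  gcongr with i hi
  · exact eval_iterate_derivative_nodal_nonneg
      (fun l hl => (h l (Finset.mem_of_mem_erase hl)).trans (sub_le_self x hδ)) k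
  · linarith [h i hi]

end NodalReal

section ConstSign

open Lagrange

/-- The polynomial `f` does not change sign on `I`: it is `≥ 0` throughout or `≤ 0` throughout. -/
def ConstSignOn (I : Set ℝ) (f : ℝ[X]) : Prop :=
  (∀ x ∈ I, 0 ≤ f.eval x) ∨ ∀ x ∈ I, f.eval x ≤ 0

variable {I : Set ℝ} {f g : ℝ[X]}

lemma ConstSignOn.mul (hf : ConstSignOn I f) (hg : ConstSignOn I g) : ConstSignOn I (f * g) := by
  simp only [ConstSignOn, eval_mul] at *
  rcases hf with hf | hf <;> rcases hg with hg | hg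
  · exact .inl fun x hx => mul_nonneg (hf x hx) (hg x hx)
  · exact .inr fun x hx => mul_nonpos_of_nonneg_of_nonpos (hf x hx) (hg x hx)
  · exact .inr fun x hx => mul_nonpos_of_nonpos_of_nonneg (hf x hx) (hg x hx)
  · exact .inl fun x hx => mul_nonneg_of_nonpos_of_nonpos (hf x hx) (hg x hx)

lemma constSignOn_of_forall_not_isRoot (hI : I.OrdConnected) (hf : ∀ x ∈ I, ¬f.IsRoot x) :
    ConstSignOn I f := by
  by_contra! hcon
  simp only [ConstSignOn, not_or, not_forall, not_le] at hcon
  obtain ⟨⟨p, hp, hfp⟩, q, hq, hfq⟩ := hcon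
  obtain ⟨z, hz, hfz⟩ := intermediate_value_uIcc f.continuous.continuousOn
    (Set.mem_uIcc.2 (.inl ⟨hfp.le, hfq.le⟩))
  exact hf z (hI.uIcc_subset hp hq hz) hfz

-- `S` consists of the roots of `f` in `I` of odd multiplicity.
lemma exists_constSignOn_mul_nodal (hI : I.OrdConnected) (hf : f ≠ 0) :
    ∃ S : Finset ℝ, ↑S ⊆ I ∧ (∀ t ∈ S, f.IsRoot t) ∧ ConstSignOn I (f * nodal S id) := by
  induction hd : f.natDegree using Nat.strong_induction_on generalizing f with | _ d ih => ?_
  by_cases hroot : ∃ t ∈ I, f.IsRoot t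
  swap
  · push Not at hroot
    exact ⟨∅, by simp, by simp, by simpa using constSignOn_of_forall_not_isRoot hI hroot⟩
  obtain ⟨t, htI, ht⟩ := hroot
  obtain ⟨q, rfl⟩ := dvd_iff_isRoot.2 ht
  have hq : q ≠ 0 := right_ne_zero_of_mul hf
  rw [natDegree_mul (X_sub_C_ne_zero t) hq, natDegree_X_sub_C] at hd
  obtain ⟨S, hSI, hS, hsign⟩ := ih q.natDegree (by omega) hq rfl
  have hqf : ∀ s ∈ S, ((X - C t) * q).IsRoot s := fun s hs => root_mul_left_of_isRoot _ (hS s hs)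
  by_cases htS : t ∈ S
  · refine ⟨S.erase t, fun s hs => hSI (Finset.mem_of_mem_erase hs),
      fun s hs => hqf s (Finset.mem_of_mem_erase hs), ?_⟩
    convert hsign using 1
    rw [nodal_eq_mul_nodal_erase htS, id]
    ring
  · refine ⟨insert t S, ?_, ?_, ?_⟩
    · simpa [Set.insert_subset_iff] using ⟨htI, hSI⟩
    · simpa only [Finset.forall_mem_insert] using ⟨ht, hqf⟩
    · have hsq : ConstSignOn I ((X - C t) ^ 2) :=
        .inl fun x _ => by rw [eval_pow]; exact sq_nonneg _
      convert hsq.mul hsign using 1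
      rw [nodal_insert_eq_nodal htS, id]
      ring

end ConstSign

section OrthogonalPolynomials

open Lagrange

/-- The linear functional `L` is strictly positive on the nonzero polynomials that are nonnegative
on `I`, as is integration against a positive weight supported on `I`. -/
def IsPositiveOn (L : ℝ[X] →ₗ[ℝ] ℝ) (I : Set ℝ) : Prop :=
  ∀ f : ℝ[X], f ≠ 0 → (∀ x ∈ I, 0 ≤ f.eval x) → 0 < L f

/-- `P` is the `n`-th orthogonal polynomial, normalised only up to a positive factor, for the
bilinear form `B`. -/
structure IsOrthogonalPolynomial (B : ℝ[X] → ℝ[X] → ℝ) (n : ℕ) (P : ℝ[X]) : Prop where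
  natDegree_eq : P.natDegree = n
  leadingCoeff_pos : 0 < P.leadingCoeff
  apply_eq_zero : ∀ f : ℝ[X], f.degree < n → B P f = 0

/-- The Sobolev bilinear form `L (f g) + m f⁽ʲ⁾(b) g⁽ʲ⁾(b)`. -/
noncomputable def sobolevForm (L : ℝ[X] →ₗ[ℝ] ℝ) (b : ℝ) (j : ℕ) (m : ℝ) (f g : ℝ[X]) : ℝ :=
  L (f * g) + m * (derivative^[j] f).eval b * (derivative^[j] g).eval b

variable {L : ℝ[X] →ₗ[ℝ] ℝ} {I : Set ℝ} {a b : ℝ} {j n : ℕ} {m : ℝ} {P Q : ℝ[X]}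

lemma IsPositiveOn.apply_ne_zero (hL : IsPositiveOn L I) {f : ℝ[X]} (hf : f ≠ 0)
    (hsign : ConstSignOn I f) : L f ≠ 0 := by
  rcases hsign with h | h
  · exact (hL f hf h).ne'
  · have hneg := hL (-f) (neg_ne_zero.2 hf) fun x hx => by simpa using h x hx
    rw [map_neg] at hneg
    exact (neg_pos.1 hneg).ne

lemma IsOrthogonalPolynomial.ne_zero {B : ℝ[X] → ℝ[X] → ℝ} (hP : IsOrthogonalPolynomial B n P) :
    P ≠ 0 :=
  leadingCoeff_ne_zero.1 hP.leadingCoeff_pos.ne'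

lemma IsOrthogonalPolynomial.exists_nodal (hP : IsOrthogonalPolynomial (fun f g => L (f * g)) n P)
    (hL : IsPositiveOn L I) (hI : I.OrdConnected) :
    ∃ S : Finset ℝ, ↑S ⊆ I ∧ P = C P.leadingCoeff * nodal S id := by
  obtain ⟨S, hSI, hroot, hsign⟩ := exists_constSignOn_mul_nodal hI hP.ne_zero
  refine ⟨S, hSI, eq_C_leadingCoeff_mul_nodal ?_ hroot⟩
  by_contra! hlt
  rw [hP.natDegree_eq] at hlt
  exact hL.apply_ne_zero (mul_ne_zero hP.ne_zero nodal_ne_zero) hsign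
    (hP.apply_eq_zero _ (by rwa [degree_nodal, Nat.cast_lt]))

lemma IsOrthogonalPolynomial.of_C_mul {c : ℝ} (hc : 0 < c)
    (hP : IsOrthogonalPolynomial (fun f g => L (f * g)) n (C c * P)) :
    IsOrthogonalPolynomial (fun f g => L (f * g)) n P where
  natDegree_eq := by rw [← hP.natDegree_eq, natDegree_C_mul hc.ne']
  leadingCoeff_pos := by
    have := hP.leadingCoeff_pos
    rw [leadingCoeff_mul, leadingCoeff_C] at this
    exact pos_of_mul_pos_right this hc.le
  apply_eq_zero f hf := by
    have := hP.apply_eq_zero f hf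
    rw [mul_assoc, ← smul_eq_C_mul, map_smul, smul_eq_zero] at this
    exact this.resolve_left hc.ne'

-- Degree-`n` exactness of Gauss quadrature, for polynomials vanishing at all nodes but `c`.
lemma apply_mul_nodal_erase {S : Finset ℝ} {c : ℝ} (hc : c ∈ S)
    (hS : IsOrthogonalPolynomial (fun f g => L (f * g)) n (nodal S id)) {f : ℝ[X]}
    (hf : f.degree < n) :
    L (f * nodal (S.erase c) id) = f.eval c * L (nodal (S.erase c) id) := by
  have hdiv : f * nodal (S.erase c) id =
      f.eval c • nodal (S.erase c) id + nodal S id * (f /ₘ (X - C c)) := by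
    conv_lhs => rw [← modByMonic_add_div f (X - C c), modByMonic_X_sub_C_eq_C_eval]
    rw [nodal_eq_mul_nodal_erase hc, smul_eq_C_mul, id]
    ring
  have horth := hS.apply_eq_zero (f /ₘ (X - C c)) ((degree_divByMonic_le f _).trans_lt hf)
  rw [hdiv, map_add, map_smul, horth, add_zero, smul_eq_mul]

lemma apply_nodal_erase_pos (hL : IsPositiveOn L I) {S : Finset ℝ} {c : ℝ}
    (hc : IsGreatest (S : Set ℝ) c)
    (hS : IsOrthogonalPolynomial (fun f g => L (f * g)) n (nodal S id)) :
    0 < L (nodal (S.erase c) id) := by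
  have hcard : S.card = n := by rw [← hS.natDegree_eq, natDegree_nodal]
  have hdeg : (nodal (S.erase c) id).degree < n := by
    rw [degree_nodal, Nat.cast_lt, ← hcard]
    exact Finset.card_erase_lt_of_mem hc.1
  have hsq : 0 < L (nodal (S.erase c) id * nodal (S.erase c) id) :=
    hL _ (mul_ne_zero nodal_ne_zero nodal_ne_zero) fun x _ => by
      rw [eval_mul]; exact mul_self_nonneg _
  rw [apply_mul_nodal_erase hc.1 hS hdeg] at hsq
  refine pos_of_mul_pos_right hsq (eval_iterate_derivative_nodal_nonneg (fun t ht => ?_) 0)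
  exact hc.2 (Finset.mem_of_mem_erase ht)

lemma eval_isGreatest_node_nonpos (hL : IsPositiveOn L I) {S : Finset ℝ} {c : ℝ}
    (hSb : ∀ t ∈ S, t ≤ b) (hc : IsGreatest (S : Set ℝ) c)
    (hP : IsOrthogonalPolynomial (fun f g => L (f * g)) n P)
    (hPS : P = C P.leadingCoeff * nodal S id) (hm : 0 ≤ m)
    (hQ : ∀ f : ℝ[X], f.degree < n → sobolevForm L b j m Q f = 0)
    (hQj : 0 ≤ (derivative^[j] Q).eval b) (hQP : (Q - P).degree < n) : Q.eval c ≤ 0 := by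
  have hS : IsOrthogonalPolynomial (fun f g => L (f * g)) n (nodal S id) :=
    .of_C_mul hP.leadingCoeff_pos (hPS ▸ hP)
  have hPc : P.eval c = 0 := by
    rw [hPS, eval_mul, ← id_eq c, eval_nodal_at_node hc.1, mul_zero]
  have hdeg : (nodal (S.erase c) id).degree < n := by
    rw [degree_nodal, Nat.cast_lt, ← hS.natDegree_eq, natDegree_nodal]
    exact Finset.card_erase_lt_of_mem hc.1
  have hgauss := apply_mul_nodal_erase hc.1 hS hQP
  have hPg : L (P * nodal (S.erase c) id) = 0 := hP.apply_eq_zero _ hdeg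
  rw [sub_mul, map_sub, hPg, sub_zero, eval_sub, hPc, sub_zero] at hgauss
  have hsob := hQ _ hdeg
  rw [sobolevForm, hgauss] at hsob
  have hmass := mul_nonneg (mul_nonneg hm hQj) (eval_iterate_derivative_nodal_nonneg
    (s := S.erase c) (v := id) (x := b) (fun t ht => hSb t (Finset.mem_of_mem_erase ht)) j)
  exact nonpos_of_mul_nonpos_left (by linarith) (apply_nodal_erase_pos hL hc hS)

lemma exists_isRoot_ge_of_eval_nonpos {f : ℝ[X]} {c : ℝ} (hdeg : 0 < f.degree)
    (hlead : 0 ≤ f.leadingCoeff) (hc : f.eval c ≤ 0) : ∃ z, c ≤ z ∧ f.IsRoot z := by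
  have htop := tendsto_atTop_of_leadingCoeff_nonneg f hdeg hlead
  obtain ⟨u, hu, hcu⟩ := ((htop.eventually_ge_atTop 0).and (eventually_ge_atTop c)).exists
  obtain ⟨z, hz, hfz⟩ := intermediate_value_Icc hcu f.continuous.continuousOn ⟨hc, hu⟩
  exact ⟨z, hz.1, hfz⟩

-- With too few sign changes, their nodal polynomial could be made admissible by a factor `X - s`
-- with `b ≤ s`, which does not change sign on `(a, b)`.
lemma exists_card_le_isRoot_of_apply_eq_zero (hL : IsPositiveOn L (Set.Ioo a b)) (hQ : Q ≠ 0)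
    (horth : ∀ f : ℝ[X], f.degree < n → (derivative^[j] f).eval b = 0 → L (Q * f) = 0) :
    ∃ S : Finset ℝ, ↑S ⊆ Set.Ioo a b ∧ (∀ t ∈ S, Q.IsRoot t) ∧ n ≤ S.card + 1 := by
  obtain ⟨S, hSI, hroot, hsign⟩ := exists_constSignOn_mul_nodal Set.ordConnected_Ioo hQ
  refine ⟨S, hSI, hroot, ?_⟩
  by_contra! hlt
  have hnonneg (k : ℕ) : 0 ≤ (derivative^[k] (nodal S id)).eval b :=
    eval_iterate_derivative_nodal_nonneg (fun t ht => (hSI ht).2.le) k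
  set F := nodal S id
  have hQF : Q * F ≠ 0 := mul_ne_zero hQ nodal_ne_zero
  rcases (hnonneg j).eq_or_lt with hzero | hpos
  · refine hL.apply_ne_zero hQF hsign (horth F ?_ hzero.symm)
    rw [degree_nodal, Nat.cast_lt]
    omega
  · set s := b + j * (derivative^[j - 1] F).eval b / (derivative^[j] F).eval b
    have hbs : b ≤ s := le_add_of_nonneg_right
      (div_nonneg (mul_nonneg j.cast_nonneg (hnonneg (j - 1))) hpos.le)
    have hadm : (derivative^[j] ((X - C s) * F)).eval b = 0 := by
      rw [iterate_derivative_X_sub_C_mul]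
      simp only [eval_add, eval_mul, eval_sub, eval_X, eval_C, eval_natCast, nsmul_eq_mul, s]
      field_simp
      ring
    have hdeg : ((X - C s) * F).degree < (n : WithBot ℕ) := by
      rw [degree_mul, degree_X_sub_C, degree_nodal]
      exact_mod_cast (by omega : 1 + S.card < n)
    have hfactor : ConstSignOn (Set.Ioo a b) (X - C s) := .inr fun x hx => by
      simpa using hx.2.le.trans hbs
    refine hL.apply_ne_zero (mul_ne_zero (X_sub_C_ne_zero s) hQF) (hfactor.mul hsign) ?_
    rw [mul_left_comm]
    exact horth _ hdeg hadm

lemma IsOrthogonalPolynomial.root_le (hL : IsPositiveOn L (Set.Ioo a b)) (hab : a ≤ b)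
    (hQ : IsOrthogonalPolynomial (sobolevForm L b j m) n Q) (hjn : j < n)
    (hQj : 0 < (derivative^[j] Q).eval b) {y : ℝ} (hy : Q.IsRoot y) :
    y ≤ b + j * (b - a) / (n - j) := by
  have hnj : (0 : ℝ) < n - j := sub_pos.2 (Nat.cast_lt.2 hjn)
  by_contra! hlt
  have hstep : 0 ≤ j * (b - a) / (n - j) :=
    div_nonneg (mul_nonneg j.cast_nonneg (sub_nonneg.2 hab)) hnj.le
  obtain ⟨S, hSI, hroot, hcard⟩ := exists_card_le_isRoot_of_apply_eq_zero (j := j) hL hQ.ne_zero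
    fun f hf hfj => by simpa [sobolevForm, hfj] using hQ.apply_eq_zero f hf
  have hyS : y ∉ S := fun h => by linarith [(hSI h).2]
  have hfactor : Q = C Q.leadingCoeff * ((X - C y) * nodal S id) := by
    rw [← id_eq y, ← nodal_insert_eq_nodal hyS]
    refine eq_C_leadingCoeff_mul_nodal ?_ ((Finset.forall_mem_insert _ _ _).2 ⟨hy, hroot⟩)
    rwa [hQ.natDegree_eq, Finset.card_insert_of_notMem hyS]
  have hnonneg (k : ℕ) : 0 ≤ (derivative^[k] (nodal S id)).eval b :=
    eval_iterate_derivative_nodal_nonneg (fun t ht => (hSI ht).2.le) k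
  have hratio : j * ((n - j) * (derivative^[j - 1] (nodal S id)).eval b) ≤
      j * ((b - a) * (derivative^[j] (nodal S id)).eval b) := by
    rcases j with _ | i
    · simp
    · have hn : (n : ℝ) ≤ S.card + 1 := by exact_mod_cast hcard
      have hle := card_sub_mul_eval_iterate_derivative_nodal_le (s := S) (v := id) (x := b)
        (r := b - a) (fun t ht => ⟨by simpa using (hSI ht).1.le, (hSI ht).2.le⟩) i
      refine mul_le_mul_of_nonneg_left
        (le_trans (mul_le_mul_of_nonneg_right ?_ (hnonneg i)) hle) (Nat.cast_nonneg _)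
      push_cast
      linarith
  have hderiv : (y - b) * (derivative^[j] (nodal S id)).eval b <
      j * (derivative^[j - 1] (nodal S id)).eval b := by
    rw [hfactor, iterate_derivative_C_mul, iterate_derivative_X_sub_C_mul, eval_C_mul] at hQj
    have := pos_of_mul_pos_right hQj hQ.leadingCoeff_pos.le
    simp only [eval_add, eval_mul, eval_sub, eval_X, eval_C, eval_natCast, nsmul_eq_mul] at this
    linarith
  have hgap : j * (b - a) ≤ (y - b) * (n - j) := by
    rw [← div_le_iff₀ hnj]
    linarith
  nlinarith [mul_lt_mul_of_pos_left hderiv hnj, mul_le_mul_of_nonneg_right hgap (hnonneg j)]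

end OrthogonalPolynomials

section JacobiIdentities

variable {α β : ℝ} {n k : ℕ}

/-- The coefficient of `((x - 1) / 2) ^ k * ((x + 1) / 2) ^ (n - k)` in `P_n^{(α,β)}`. -/
noncomputable def jacobiCoeff (α β : ℝ) (n k : ℕ) : ℝ :=
  Real.Gamma (n + α + 1) / (Real.Gamma ((n : ℝ) - k + 1) * Real.Gamma (α + k + 1)) *
    (Real.Gamma (n + β + 1) / (Real.Gamma ((k : ℝ) + 1) * Real.Gamma ((n : ℝ) - k + β + 1)))

lemma jacobiP_eq_sum (α β : ℝ) (n : ℕ) : jacobiP α β n = ∑ k ∈ Finset.range (n + 1),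
    C (jacobiCoeff α β n k) * (C 2⁻¹ * (X - 1)) ^ k * (C 2⁻¹ * (X + 1)) ^ (n - k) :=
  rfl

lemma jacobiP_zero (hα : -1 < α) (hβ : -1 < β) : jacobiP α β 0 = 1 := by
  have hΓα : Real.Gamma (α + 1) ≠ 0 := (Real.Gamma_pos_of_pos (by linarith)).ne'
  have hΓβ : Real.Gamma (β + 1) ≠ 0 := (Real.Gamma_pos_of_pos (by linarith)).ne'
  simp [jacobiP_eq_sum, jacobiCoeff, hΓα, hΓβ]

lemma add_mul_jacobiCoeff_add_one (hα : -1 < α) (hk : k ≤ n) :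
    (k + α + 1) * jacobiCoeff (α + 1) (β + 1) n k =
      ((n : ℝ) - k + 1) * jacobiCoeff α β (n + 1) k := by
  have hkn : (k : ℝ) ≤ n := Nat.cast_le.2 hk
  have hαk : k + α + 1 ≠ 0 := by linarith [k.cast_nonneg (α := ℝ)]
  have hnk : (n : ℝ) - k + 1 ≠ 0 := by linarith
  have hΓα : Real.Gamma (α + 1 + k + 1) = (k + α + 1) * Real.Gamma (α + k + 1) := by
    rw [← add_comm α, ← Real.Gamma_add_one (by rwa [add_comm α]), add_right_comm α 1]
  have hΓn : Real.Gamma ((n : ℝ) + 1 - k + 1) = (n - k + 1) * Real.Gamma ((n : ℝ) - k + 1) := by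
    rw [← Real.Gamma_add_one hnk, add_sub_right_comm]
  rw [jacobiCoeff, jacobiCoeff, Nat.cast_add_one, hΓα, hΓn, add_sub_right_comm,
    add_right_comm _ 1 α, add_right_comm _ 1 β, add_right_comm _ 1 β, ← add_assoc _ α,
    ← add_assoc _ β, ← add_assoc _ β]
  field_simp

lemma sub_add_mul_jacobiCoeff_add_one (hβ : -1 < β) (hk : k ≤ n) :
    ((n : ℝ) - k + β + 1) * jacobiCoeff (α + 1) (β + 1) n k =
      (k + 1) * jacobiCoeff α β (n + 1) (k + 1) := by
  have hkn : (k : ℝ) ≤ n := Nat.cast_le.2 hk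
  have hβk : (n : ℝ) - k + β + 1 ≠ 0 := by linarith
  have hk1 : (k : ℝ) + 1 ≠ 0 := by positivity
  have hΓβ : Real.Gamma ((n : ℝ) - k + (β + 1) + 1) =
      (n - k + β + 1) * Real.Gamma ((n : ℝ) - k + β + 1) := by
    rw [← Real.Gamma_add_one hβk, add_assoc _ β]
  rw [jacobiCoeff, jacobiCoeff, Nat.cast_add_one, Nat.cast_add_one, hΓβ, Real.Gamma_add_one hk1,
    add_sub_add_right_eq_sub, add_right_comm _ 1 α, add_right_comm _ 1 β, ← add_assoc _ α,
    ← add_assoc _ β, ← add_assoc α, add_right_comm α 1]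
  field_simp

lemma derivative_pow_mul_pow {r u v : ℝ[X]} (hu : derivative u = r) (hv : derivative v = r)
    (k m : ℕ) :
    derivative (u ^ k * v ^ m) = r * (k * u ^ (k - 1) * v ^ m + m * u ^ k * v ^ (m - 1)) := by
  rw [derivative_mul, derivative_pow, derivative_pow, hu, hv, map_natCast, map_natCast]
  ring

lemma mul_mul_derivative_pow_mul_pow {r u v : ℝ[X]} (hu : derivative u = r)
    (hv : derivative v = r) (k m : ℕ) :
    u * v * derivative (u ^ k * v ^ m) =
      r * (k * u ^ k * v ^ (m + 1) + m * u ^ (k + 1) * v ^ m) := by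
  rw [derivative_pow_mul_pow hu hv]
  rcases k with _ | k <;> rcases m with _ | m <;>
    simp only [Nat.cast_zero, Nat.add_sub_cancel] <;> ring

lemma derivative_jacobiP_succ (hα : -1 < α) (hβ : -1 < β) (n : ℕ) :
    derivative (jacobiP α β (n + 1)) =
      C ((n + α + β + 2) / 2) * jacobiP (α + 1) (β + 1) n := by
  set u : ℝ[X] := C 2⁻¹ * (X - 1) with hu
  set v : ℝ[X] := C 2⁻¹ * (X + 1) with hv
  set c := jacobiCoeff α β (n + 1)
  have hu' : derivative u = C 2⁻¹ := by simp [hu]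
  have hv' : derivative v = C 2⁻¹ := by simp [hv]
  calc derivative (jacobiP α β (n + 1))
    _ = C 2⁻¹ * (∑ k ∈ Finset.range (n + 2), C (c k * k) * u ^ (k - 1) * v ^ (n + 1 - k) +
          ∑ k ∈ Finset.range (n + 2), C (c k * (n + 1 - k : ℕ)) * u ^ k * v ^ (n - k)) := by
      rw [jacobiP_eq_sum, derivative_sum, ← Finset.sum_add_distrib, Finset.mul_sum]
      refine Finset.sum_congr rfl fun k _ => ?_
      rw [mul_assoc, derivative_C_mul, derivative_pow_mul_pow hu' hv', C_mul, C_mul, map_natCast,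
        map_natCast, Nat.sub_right_comm, Nat.add_sub_cancel]
      ring
    _ = C 2⁻¹ * ∑ k ∈ Finset.range (n + 1),
          C ((k + 1) * c (k + 1) + (n - k + 1) * c k) * u ^ k * v ^ (n - k) := by
      rw [Finset.sum_range_succ' _ (n + 1), Finset.sum_range_succ _ (n + 1)]
      simp only [Nat.cast_zero, mul_zero, C_0, zero_mul, add_zero, Nat.sub_self,
        ← Finset.sum_add_distrib]
      congr 1
      refine Finset.sum_congr rfl fun k hk => ?_
      rw [Nat.cast_sub (Finset.mem_range.1 hk).le, Nat.add_sub_cancel, Nat.add_sub_add_right]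
      simp only [Nat.cast_add_one, C_add, C_mul, C_sub]
      ring
    _ = C ((n + α + β + 2) / 2) * jacobiP (α + 1) (β + 1) n := by
      rw [jacobiP_eq_sum, Finset.mul_sum, Finset.mul_sum]
      refine Finset.sum_congr rfl fun k hk => ?_
      have hk := Nat.le_of_lt_succ (Finset.mem_range.1 hk)
      rw [← add_mul_jacobiCoeff_add_one hα hk, ← sub_add_mul_jacobiCoeff_add_one hβ hk]
      simp only [← mul_assoc, ← C_mul]
      congr 3
      ring

-- The raising identity with `(X ± 1) / 2` unexpanded, where it holds coefficient by coefficient.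
lemma half_raising_jacobiP (hα : -1 < α) (hβ : -1 < β) (n : ℕ) :
    2 * (C 2⁻¹ * (X - 1) * (C 2⁻¹ * (X + 1)) * derivative (jacobiP (α + 1) (β + 1) n)) +
        (C (α + 1) * (C 2⁻¹ * (X + 1)) + C (β + 1) * (C 2⁻¹ * (X - 1))) *
          jacobiP (α + 1) (β + 1) n =
      C (n + 1 : ℝ) * jacobiP α β (n + 1) := by
  rw [jacobiP_eq_sum, jacobiP_eq_sum]
  set u : ℝ[X] := C 2⁻¹ * (X - 1) with hu
  set v : ℝ[X] := C 2⁻¹ * (X + 1) with hv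
  set c := jacobiCoeff α β (n + 1)
  set c' := jacobiCoeff (α + 1) (β + 1) n
  have hu' : derivative u = C 2⁻¹ := by simp [hu]
  have hv' : derivative v = C 2⁻¹ := by simp [hv]
  have hC : (2 * C 2⁻¹ : ℝ[X]) = 1 := by rw [← map_ofNat C, ← C_mul]; norm_num
  have hterm : ∀ k ∈ Finset.range (n + 1),
      2 * (u * v * derivative (C (c' k) * u ^ k * v ^ (n - k))) +
          (C (α + 1) * v + C (β + 1) * u) * (C (c' k) * u ^ k * v ^ (n - k)) =
        C ((n + 1 - k) * c k) * u ^ k * v ^ (n + 1 - k) +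
          C ((k + 1) * c (k + 1)) * u ^ (k + 1) * v ^ (n - k) := by
    intro k hk
    have hk := Nat.le_of_lt_succ (Finset.mem_range.1 hk)
    rw [add_sub_right_comm, ← add_mul_jacobiCoeff_add_one hα hk,
      ← sub_add_mul_jacobiCoeff_add_one hβ hk, mul_assoc (C _) (u ^ k), derivative_C_mul,
      mul_left_comm (u * v), mul_mul_derivative_pow_mul_pow hu' hv', Nat.sub_add_comm hk]
    simp only [C_add, C_mul, C_sub, C_1, map_natCast, Nat.cast_sub hk]
    linear_combination (C (c' k) * (k * u ^ k * v ^ (n - k + 1) +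
      (n - k) * u ^ (k + 1) * v ^ (n - k))) * hC
  calc _ = ∑ k ∈ Finset.range (n + 1), C ((n + 1 - k) * c k) * u ^ k * v ^ (n + 1 - k) +
        ∑ k ∈ Finset.range (n + 1), C ((k + 1) * c (k + 1)) * u ^ (k + 1) * v ^ (n - k) := by
        rw [derivative_sum, ← Finset.sum_add_distrib, ← Finset.sum_congr rfl hterm,
          Finset.sum_add_distrib]
        simp only [Finset.mul_sum]
    _ = ∑ k ∈ Finset.range (n + 2), C ((n + 1 - k) * c k) * u ^ k * v ^ (n + 1 - k) +
        ∑ k ∈ Finset.range (n + 2), C (k * c k) * u ^ k * v ^ (n + 1 - k) := by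
        rw [Finset.sum_range_succ _ (n + 1), Finset.sum_range_succ' _ (n + 1)]
        simp
    _ = _ := by
        rw [← Finset.sum_add_distrib, Finset.mul_sum]
        refine Finset.sum_congr rfl fun k _ => ?_
        simp only [C_add, C_mul, C_sub, map_natCast]
        ring

lemma raising_jacobiP (hα : -1 < α) (hβ : -1 < β) (n : ℕ) :
    (1 - X ^ 2) * derivative (jacobiP (α + 1) (β + 1) n) +
        (C (β - α) - C (α + β + 2) * X) * jacobiP (α + 1) (β + 1) n =
      C (-2 * (n + 1) : ℝ) * jacobiP α β (n + 1) := by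
  have hC : (2 * C 2⁻¹ : ℝ[X]) = 1 := by rw [← map_ofNat C, ← C_mul]; norm_num
  rw [C_mul, mul_assoc, ← half_raising_jacobiP hα hβ]
  simp only [C_add, C_sub, C_1, C_neg, C_ofNat]
  linear_combination (derivative (jacobiP (α + 1) (β + 1) n) * (X ^ 2 - 1) * (2 * C 2⁻¹ + 1) +
    jacobiP (α + 1) (β + 1) n * (C α * (X + 1) + C β * (X - 1) + 2 * X)) * hC

lemma natDegree_jacobiP_le (hα : -1 < α) (hβ : -1 < β) (n : ℕ) :
    (jacobiP α β n).natDegree ≤ n := by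
  induction n generalizing α β with
  | zero => rw [jacobiP_zero hα hβ, natDegree_one]
  | succ n ih =>
    have hle : (derivative (jacobiP α β (n + 1))).natDegree ≤ n := by
      rw [derivative_jacobiP_succ hα hβ]
      exact (natDegree_C_mul_le _ _).trans (ih (by linarith) (by linarith))
    rw [natDegree_derivative] at hle
    omega

lemma coeff_jacobiP_pos (hα : -1 < α) (hβ : -1 < β) (n : ℕ) : 0 < (jacobiP α β n).coeff n := by
  induction n generalizing α β with
  | zero => simp [jacobiP_zero hα hβ]
  | succ n ih =>
    have hcoeff : (jacobiP α β (n + 1)).coeff (n + 1) * (n + 1) =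
        (n + α + β + 2) / 2 * (jacobiP (α + 1) (β + 1) n).coeff n := by
      rw [← coeff_derivative, derivative_jacobiP_succ hα hβ, coeff_C_mul]
    have hpos : (0 : ℝ) < (n + α + β + 2) / 2 := by linarith [n.cast_nonneg (α := ℝ)]
    refine pos_of_mul_pos_left (b := (n + 1 : ℝ)) ?_ (by positivity)
    rw [hcoeff]
    exact mul_pos hpos (ih (by linarith) (by linarith))

lemma natDegree_jacobiP (hα : -1 < α) (hβ : -1 < β) (n : ℕ) : (jacobiP α β n).natDegree = n :=
  (natDegree_jacobiP_le hα hβ n).antisymm (le_natDegree_of_ne_zero (coeff_jacobiP_pos hα hβ n).ne')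

lemma leadingCoeff_jacobiP_pos (hα : -1 < α) (hβ : -1 < β) (n : ℕ) :
    0 < (jacobiP α β n).leadingCoeff := by
  rw [leadingCoeff, natDegree_jacobiP hα hβ]
  exact coeff_jacobiP_pos hα hβ n

lemma degree_jacobiP (hα : -1 < α) (hβ : -1 < β) (n : ℕ) : (jacobiP α β n).degree = n := by
  rw [degree_eq_natDegree (leadingCoeff_ne_zero.1 (leadingCoeff_jacobiP_pos hα hβ n).ne'),
    natDegree_jacobiP hα hβ]

-- The Jacobi differential equation at the singular point `x = 1`.
lemma two_mul_eval_one_derivative_jacobiP (hα : -1 < α) (hβ : -1 < β) (n : ℕ) :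
    2 * (α + 1) * (derivative (jacobiP α β n)).eval 1 =
      n * (n + α + β + 1) * (jacobiP α β n).eval 1 := by
  rcases n with _ | n
  · simp [jacobiP_zero hα hβ]
  · have hraise := congrArg (eval 1) (raising_jacobiP hα hβ n)
    simp only [eval_add, eval_mul, eval_sub, eval_pow, eval_X, eval_C, eval_one] at hraise
    rw [derivative_jacobiP_succ hα hβ, eval_C_mul, Nat.cast_add_one]
    linear_combination (-(n + α + β + 2) / 2) * hraise

end JacobiIdentities

section JacobiFunctional

open MeasureTheory

variable {α β : ℝ}

/-- The Jacobi weight `(1 - x) ^ α * (1 + x) ^ β`; it is only meant for `x ∈ [-1, 1]`. -/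
noncomputable def jacobiWeight (α β x : ℝ) : ℝ :=
  (1 - x) ^ α * (1 + x) ^ β

lemma jacobiWeight_pos (α β : ℝ) {x : ℝ} (hx : x ∈ Set.Ioo (-1 : ℝ) 1) : 0 < jacobiWeight α β x :=
  mul_pos (Real.rpow_pos_of_pos (sub_pos.2 hx.2) α)
    (Real.rpow_pos_of_pos (neg_lt_iff_pos_add'.1 hx.1) β)

lemma jacobiWeight_neg (α β x : ℝ) : jacobiWeight α β (-x) = jacobiWeight β α x := by
  rw [jacobiWeight, jacobiWeight, sub_neg_eq_add, ← sub_eq_add_neg, mul_comm]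

lemma jacobiWeight_add_one (α β : ℝ) {x : ℝ} (hx : x ∈ Set.Ioo (-1 : ℝ) 1) :
    jacobiWeight (α + 1) (β + 1) x = (1 - x ^ 2) * jacobiWeight α β x := by
  rw [jacobiWeight, Real.rpow_add_one (sub_pos.2 hx.2).ne',
    Real.rpow_add_one (neg_lt_iff_pos_add'.1 hx.1).ne', jacobiWeight]
  ring

lemma continuous_jacobiWeight (hα : 0 ≤ α) (hβ : 0 ≤ β) : Continuous (jacobiWeight α β) :=
  ((continuous_const.sub continuous_id).rpow_const fun _ => .inr hα).mul
    ((continuous_const.add continuous_id).rpow_const fun _ => .inr hβ)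

lemma hasDerivAt_jacobiWeight_add_one (α β : ℝ) {x : ℝ} (hx : x ∈ Set.Ioo (-1 : ℝ) 1) :
    HasDerivAt (jacobiWeight (α + 1) (β + 1))
      ((β - α - (α + β + 2) * x) * jacobiWeight α β x) x := by
  have hminus : 1 - x ≠ 0 := (sub_pos.2 hx.2).ne'
  have hplus : 1 + x ≠ 0 := (neg_lt_iff_pos_add'.1 hx.1).ne'
  refine ((((hasDerivAt_id x).const_sub 1).rpow_const (p := α + 1) (.inl hminus)).mul
    (((hasDerivAt_id x).const_add 1).rpow_const (p := β + 1) (.inl hplus))).congr_deriv ?_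
  simp only [id, add_sub_cancel_right, Real.rpow_add_one hminus, Real.rpow_add_one hplus,
    jacobiWeight]
  ring

lemma intervalIntegrable_jacobiWeight_left (α : ℝ) (hβ : -1 < β) :
    IntervalIntegrable (jacobiWeight α β) volume (-1) 0 := by
  have hright : IntervalIntegrable (fun x : ℝ => (1 + x) ^ β) volume (-1) 0 := by
    simpa using (intervalIntegral.intervalIntegrable_rpow' hβ (a := 0) (b := 1)).comp_add_left 1
  refine hright.continuousOn_mul (ContinuousOn.rpow_const (by fun_prop) fun x hx => ?_)
  rw [Set.uIcc_of_le (by norm_num)] at hx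
  exact .inl (by linarith [hx.2])

lemma intervalIntegrable_jacobiWeight (hα : -1 < α) (hβ : -1 < β) :
    IntervalIntegrable (jacobiWeight α β) volume (-1) 1 := by
  refine (intervalIntegrable_jacobiWeight_left α hβ).trans ?_
  rw [IntervalIntegrable.iff_comp_neg]
  simpa only [jacobiWeight_neg, neg_zero] using (intervalIntegrable_jacobiWeight_left β hα).symm

lemma intervalIntegrable_eval_mul_jacobiWeight (hα : -1 < α) (hβ : -1 < β) (f : ℝ[X]) :
    IntervalIntegrable (fun x => f.eval x * jacobiWeight α β x) volume (-1) 1 :=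
  (intervalIntegrable_jacobiWeight hα hβ).continuousOn_mul f.continuous.continuousOn

/-- Integration of polynomials against the Jacobi weight, as a linear functional. -/
noncomputable def jacobiFunctional (hα : -1 < α) (hβ : -1 < β) : ℝ[X] →ₗ[ℝ] ℝ where
  toFun f := ∫ x in (-1 : ℝ)..1, f.eval x * jacobiWeight α β x
  map_add' f g := by
    simp only [eval_add, add_mul]
    exact intervalIntegral.integral_add (intervalIntegrable_eval_mul_jacobiWeight hα hβ f)
      (intervalIntegrable_eval_mul_jacobiWeight hα hβ g)
  map_smul' c f := by
    simp only [eval_smul, smul_eq_mul, mul_assoc, intervalIntegral.integral_const_mul,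
      RingHom.id_apply]

lemma jacobiFunctional_apply (hα : -1 < α) (hβ : -1 < β) (f : ℝ[X]) :
    jacobiFunctional hα hβ f = ∫ x in (-1 : ℝ)..1, f.eval x * jacobiWeight α β x :=
  rfl

lemma isPositiveOn_jacobiFunctional (hα : -1 < α) (hβ : -1 < β) :
    IsPositiveOn (jacobiFunctional hα hβ) (Set.Ioo (-1) 1) := by
  intro f hf hnonneg
  have hIoc : Set.uIoc (-1 : ℝ) 1 = Set.Ioc (-1) 1 := Set.uIoc_of_le (by norm_num)
  have hae : 0 ≤ᵐ[volume.restrict (Set.uIoc (-1) 1)] fun x => f.eval x * jacobiWeight α β x := by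
    rw [hIoc, ← restrict_Ioo_eq_restrict_Ioc]
    filter_upwards [ae_restrict_mem measurableSet_Ioo] with x hx
    exact mul_nonneg (hnonneg x hx) (jacobiWeight_pos α β hx).le
  rw [jacobiFunctional_apply, intervalIntegral.integral_pos_iff_support_of_nonneg_ae' hae
    (intervalIntegrable_eval_mul_jacobiWeight hα hβ f)]
  have hsub : Set.Ioo (-1 : ℝ) 1 \ {x | f.IsRoot x} ⊆
      Function.support (fun x => f.eval x * jacobiWeight α β x) ∩ Set.Ioc (-1) 1 :=
    fun x ⟨hx, hroot⟩ =>
      ⟨mul_ne_zero hroot (jacobiWeight_pos α β hx).ne', Set.Ioo_subset_Ioc_self hx⟩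
  refine ⟨by norm_num, lt_of_lt_of_le ?_ (measure_mono hsub)⟩
  rw [measure_sdiff_null ((finite_setOfPred_isRoot hf).measure_zero volume)]
  simp

lemma jacobiFunctional_add_one (hα : -1 < α) (hβ : -1 < β) (hα' : -1 < α + 1) (hβ' : -1 < β + 1)
    (f : ℝ[X]) :
    jacobiFunctional hα' hβ' f = jacobiFunctional hα hβ ((1 - X ^ 2) * f) := by
  simp only [jacobiFunctional_apply,
    intervalIntegral.integral_of_le (show (-1 : ℝ) ≤ 1 by norm_num),
    integral_Ioc_eq_integral_Ioo]
  refine setIntegral_congr_fun measurableSet_Ioo fun x hx => ?_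
  simp only [jacobiWeight_add_one α β hx, eval_mul, eval_sub, eval_one, eval_pow, eval_X]
  ring

-- Integrate the derivative of `jacobiWeight (α + 1) (β + 1) * f`, which vanishes at `±1`.
lemma jacobiFunctional_pearson (hα : -1 < α) (hβ : -1 < β) (f : ℝ[X]) :
    jacobiFunctional hα hβ
      ((1 - X ^ 2) * derivative f + (C (β - α) - C (α + β + 2) * X) * f) = 0 := by
  have hα' : 0 < α + 1 := by linarith
  have hβ' : 0 < β + 1 := by linarith
  rw [jacobiFunctional_apply, intervalIntegral.integral_eq_sub_of_hasDerivAt_of_le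
    (f := fun x => jacobiWeight (α + 1) (β + 1) x * f.eval x) (by norm_num)
    ((continuous_jacobiWeight hα'.le hβ'.le).mul f.continuous).continuousOn (fun x hx => ?_)
    (intervalIntegrable_eval_mul_jacobiWeight hα hβ _)]
  · simp [jacobiWeight, Real.zero_rpow hα'.ne', Real.zero_rpow hβ'.ne']
  · refine ((hasDerivAt_jacobiWeight_add_one α β hx).mul (f.hasDerivAt x)).congr_deriv ?_
    simp only [jacobiWeight_add_one α β hx, eval_add, eval_mul, eval_sub, eval_one, eval_pow,
      eval_X, eval_C]
    ring

lemma jacobiFunctional_jacobiP_succ_mul (hα : -1 < α) (hβ : -1 < β) (hα' : -1 < α + 1)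
    (hβ' : -1 < β + 1) (n : ℕ) (f : ℝ[X]) :
    2 * (n + 1) * jacobiFunctional hα hβ (jacobiP α β (n + 1) * f) =
      jacobiFunctional hα' hβ' (jacobiP (α + 1) (β + 1) n * derivative f) := by
  have hpearson := jacobiFunctional_pearson hα hβ (jacobiP (α + 1) (β + 1) n * f)
  have hsplit : (1 - X ^ 2) * derivative (jacobiP (α + 1) (β + 1) n * f) +
        (C (β - α) - C (α + β + 2) * X) * (jacobiP (α + 1) (β + 1) n * f) =
      (1 - X ^ 2) * (jacobiP (α + 1) (β + 1) n * derivative f) +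
        (-2 * (n + 1) : ℝ) • (jacobiP α β (n + 1) * f) := by
    rw [smul_eq_C_mul, derivative_mul]
    linear_combination f * raising_jacobiP hα hβ n
  rw [hsplit, map_add, map_smul, ← jacobiFunctional_add_one hα hβ hα' hβ', smul_eq_mul] at hpearson
  linear_combination -hpearson

lemma isOrthogonalPolynomial_jacobiP (hα : -1 < α) (hβ : -1 < β) (n : ℕ) :
    IsOrthogonalPolynomial (fun f g => jacobiFunctional hα hβ (f * g)) n (jacobiP α β n) where
  natDegree_eq := natDegree_jacobiP hα hβ n
  leadingCoeff_pos := leadingCoeff_jacobiP_pos hα hβ n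
  apply_eq_zero f hf := by
    induction n generalizing α β f with
    | zero => rw [degree_eq_bot.1 (Nat.WithBot.lt_zero_iff.1 hf), mul_zero, map_zero]
    | succ n ih =>
      have hα' : -1 < α + 1 := by linarith
      have hβ' : -1 < β + 1 := by linarith
      have hderiv : (derivative f).degree < n := by
        rw [degree_lt_iff_coeff_zero] at hf ⊢
        intro m hm
        rw [coeff_derivative, hf (m + 1) (by omega), zero_mul]
      have hzero := jacobiFunctional_jacobiP_succ_mul hα hβ hα' hβ' n f
      rw [ih hα' hβ' _ hderiv] at hzero
      exact (mul_eq_zero.1 hzero).resolve_left (by positivity)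

end JacobiFunctional

section JacobiKernel

variable {α β : ℝ} {n : ℕ}

lemma jacobiNormSq_eq_jacobiFunctional (hα : -1 < α) (hβ : -1 < β) (n : ℕ) :
    jacobiNormSq α β n = jacobiFunctional hα hβ (jacobiP α β n * jacobiP α β n) := by
  simp only [jacobiNormSq, jacobiFunctional_apply, eval_mul, jacobiWeight, sq, mul_assoc]

lemma jacobiNormSq_pos (hα : -1 < α) (hβ : -1 < β) (n : ℕ) : 0 < jacobiNormSq α β n := by
  have hP := (isOrthogonalPolynomial_jacobiP hα hβ n).ne_zero
  rw [jacobiNormSq_eq_jacobiFunctional hα hβ]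
  exact isPositiveOn_jacobiFunctional hα hβ _ (mul_ne_zero hP hP) fun x _ => by
    rw [eval_mul]; exact mul_self_nonneg _

lemma jacobiFunctional_jacobiP_mul_jacobiP_of_ne (hα : -1 < α) (hβ : -1 < β) {i k : ℕ}
    (hik : i ≠ k) : jacobiFunctional hα hβ (jacobiP α β i * jacobiP α β k) = 0 := by
  wlog hlt : k < i generalizing i k
  · rw [mul_comm]
    exact this hik.symm (hik.lt_of_le (not_lt.1 hlt))
  · exact (isOrthogonalPolynomial_jacobiP hα hβ i).apply_eq_zero _
      (by rwa [degree_jacobiP hα hβ, Nat.cast_lt])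

/-- The Jacobi polynomials as a `Polynomial.Sequence`, one polynomial in each degree. -/
noncomputable def jacobiSequence (hα : -1 < α) (hβ : -1 < β) : Polynomial.Sequence ℝ where
  elems' := jacobiP α β
  degree_eq' := degree_jacobiP hα hβ

lemma span_jacobiP (hα : -1 < α) (hβ : -1 < β) (n : ℕ) :
    Submodule.span ℝ (jacobiP α β '' Set.Iio n) = degreeLT ℝ n :=
  (jacobiSequence hα hβ).span_degreeLT fun i _ => (leadingCoeff_jacobiP_pos hα hβ i).ne'.isUnit

lemma kernK_self_nonneg (hα : -1 < α) (hβ : -1 < β) (j n : ℕ) (x : ℝ) :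
    0 ≤ kernK α β j j n x x :=
  Finset.sum_nonneg fun i _ => div_nonneg (mul_self_nonneg _) (jacobiNormSq_pos hα hβ i).le

lemma eval_iterate_derivative_kernKPoly (α β : ℝ) (j k n : ℕ) (x : ℝ) :
    (derivative^[k] (kernKPoly α β j n)).eval x = kernK α β j k n 1 x := by
  simp only [kernKPoly, kernK, iterate_derivative_sum, iterate_derivative_C_mul, eval_finsetSum,
    eval_C_mul, div_mul_eq_mul_div]

lemma kernKPoly_mem_degreeLT (hα : -1 < α) (hβ : -1 < β) (j n : ℕ) :
    kernKPoly α β j n ∈ degreeLT ℝ (n + 1) := by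
  refine Submodule.sum_mem _ fun i hi => ?_
  rw [← smul_eq_C_mul]
  refine Submodule.smul_mem _ _ (mem_degreeLT.2 ?_)
  rw [degree_jacobiP hα hβ, Nat.cast_lt]
  exact Finset.mem_range.1 hi

lemma jacobiFunctional_kernKPoly_mul (hα : -1 < α) (hβ : -1 < β) (j : ℕ) {f : ℝ[X]}
    (hf : f ∈ degreeLT ℝ (n + 1)) :
    jacobiFunctional hα hβ (kernKPoly α β j n * f) = (derivative^[j] f).eval 1 := by
  suffices Set.EqOn (jacobiFunctional hα hβ ∘ₗ LinearMap.mulLeft ℝ (kernKPoly α β j n))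
      (leval 1 ∘ₗ derivative ^ j) (degreeLT ℝ (n + 1) : Set ℝ[X]) by
    simpa [Module.End.pow_apply] using this hf
  rw [← span_jacobiP hα hβ]
  refine LinearMap.eqOn_span ?_
  rintro _ ⟨i, hi, rfl⟩
  have hterm : ∀ l, jacobiFunctional hα hβ
      (C ((derivative^[j] (jacobiP α β l)).eval 1 / jacobiNormSq α β l) * jacobiP α β l *
        jacobiP α β i) = if l = i then (derivative^[j] (jacobiP α β i)).eval 1 else 0 := by
    intro l
    rw [mul_assoc, ← smul_eq_C_mul, map_smul, smul_eq_mul]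
    split_ifs with hl
    · rw [hl, ← jacobiNormSq_eq_jacobiFunctional, div_mul_cancel₀ _ (jacobiNormSq_pos hα hβ i).ne']
    · rw [jacobiFunctional_jacobiP_mul_jacobiP_of_ne hα hβ hl, mul_zero]
  simp only [LinearMap.comp_apply, LinearMap.mulLeft_apply, kernKPoly, Finset.sum_mul, map_sum,
    hterm, leval_apply, Module.End.pow_apply]
  rw [Finset.sum_ite_eq', if_pos (Finset.mem_range.2 hi)]

end JacobiKernel

section JacobiSobolev

variable {α β : ℝ} {j n : ℕ} {Ms : ℕ → ℝ}

lemma exists_nodal_jacobiP (hα : -1 < α) (hβ : -1 < β) (n : ℕ) :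
    ∃ S : Finset ℝ, ↑S ⊆ Set.Ioo (-1 : ℝ) 1 ∧ S.card = n ∧
      jacobiP α β n = C (jacobiP α β n).leadingCoeff * Lagrange.nodal S id := by
  have hP := isOrthogonalPolynomial_jacobiP hα hβ n
  obtain ⟨S, hS, hPS⟩ :=
    hP.exists_nodal (isPositiveOn_jacobiFunctional hα hβ) Set.ordConnected_Ioo
  refine ⟨S, hS, ?_, hPS⟩
  rw [← hP.natDegree_eq, hPS, natDegree_C_mul hP.leadingCoeff_pos.ne', Lagrange.natDegree_nodal]

lemma eval_one_iterate_derivative_jacobiP_pos (hα : -1 < α) (hβ : -1 < β) (hjn : j ≤ n) :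
    0 < (derivative^[j] (jacobiP α β n)).eval 1 := by
  obtain ⟨S, hS, rfl, hPS⟩ := exists_nodal_jacobiP hα hβ n
  rw [hPS, iterate_derivative_C_mul, eval_C_mul]
  exact mul_pos (leadingCoeff_jacobiP_pos hα hβ _)
    (eval_iterate_derivative_nodal_pos (fun t ht => (hS ht).2) hjn)

lemma one_add_mul_kernK_pos (hα : -1 < α) (hβ : -1 < β) (j k : ℕ) (hMs : 0 ≤ Ms n) :
    0 < 1 + Ms n * kernK α β j j k 1 1 :=
  add_pos_of_pos_of_nonneg one_pos (mul_nonneg hMs (kernK_self_nonneg hα hβ j k 1))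

lemma eval_one_iterate_derivative_sobQ (hα : -1 < α) (hβ : -1 < β) (j : ℕ) (hMs : 0 ≤ Ms n) :
    (derivative^[j] (sobQ α β j Ms n)).eval 1 =
      (derivative^[j] (jacobiP α β n)).eval 1 / (1 + Ms n * kernK α β j j (n - 1) 1 1) := by
  have hden := (one_add_mul_kernK_pos hα hβ j (n - 1) hMs).ne'
  rw [sobQ, iterate_derivative_sub, iterate_derivative_C_mul, eval_sub, eval_C_mul,
    eval_iterate_derivative_kernKPoly]
  field_simp
  ring

lemma eval_one_iterate_derivative_sobQ_pos (hα : -1 < α) (hβ : -1 < β) (hjn : j ≤ n)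
    (hMs : 0 ≤ Ms n) : 0 < (derivative^[j] (sobQ α β j Ms n)).eval 1 := by
  rw [eval_one_iterate_derivative_sobQ hα hβ j hMs]
  exact div_pos (eval_one_iterate_derivative_jacobiP_pos hα hβ hjn)
    (one_add_mul_kernK_pos hα hβ j (n - 1) hMs)

lemma degree_sobQ_sub_jacobiP_lt (hα : -1 < α) (hβ : -1 < β) (j : ℕ) (Ms : ℕ → ℝ) (hn : 1 ≤ n) :
    (sobQ α β j Ms n - jacobiP α β n).degree < n := by
  have hmem := kernKPoly_mem_degreeLT hα hβ j (n - 1)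
  rw [Nat.sub_add_cancel hn] at hmem
  rw [sobQ, sub_sub_cancel_left, ← smul_eq_C_mul]
  exact mem_degreeLT.1 (neg_mem (Submodule.smul_mem _ _ hmem))

lemma natDegree_sobQ (hα : -1 < α) (hβ : -1 < β) (j : ℕ) (Ms : ℕ → ℝ) (hn : 1 ≤ n) :
    (sobQ α β j Ms n).natDegree = n := by
  rw [← add_sub_cancel (jacobiP α β n) (sobQ α β j Ms n), natDegree_add_eq_left_of_degree_lt,
    natDegree_jacobiP hα hβ]
  rw [degree_jacobiP hα hβ]
  exact degree_sobQ_sub_jacobiP_lt hα hβ j Ms hn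

lemma leadingCoeff_sobQ (hα : -1 < α) (hβ : -1 < β) (j : ℕ) (Ms : ℕ → ℝ) (hn : 1 ≤ n) :
    (sobQ α β j Ms n).leadingCoeff = (jacobiP α β n).leadingCoeff := by
  rw [← add_sub_cancel (jacobiP α β n) (sobQ α β j Ms n), leadingCoeff_add_of_degree_lt']
  rw [degree_jacobiP hα hβ]
  exact degree_sobQ_sub_jacobiP_lt hα hβ j Ms hn

lemma isOrthogonalPolynomial_sobQ (hα : -1 < α) (hβ : -1 < β) (j : ℕ) (hn : 1 ≤ n)
    (hMs : 0 ≤ Ms n) :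
    IsOrthogonalPolynomial (sobolevForm (jacobiFunctional hα hβ) 1 j (Ms n)) n
      (sobQ α β j Ms n) where
  natDegree_eq := natDegree_sobQ hα hβ j Ms hn
  leadingCoeff_pos := by
    rw [leadingCoeff_sobQ hα hβ j Ms hn]
    exact leadingCoeff_jacobiP_pos hα hβ n
  apply_eq_zero f hf := by
    have hker : jacobiFunctional hα hβ (kernKPoly α β j (n - 1) * f) = (derivative^[j] f).eval 1 :=
      jacobiFunctional_kernKPoly_mul hα hβ j
        (mem_degreeLT.2 (by rwa [Nat.sub_add_cancel hn]))
    have hP : jacobiFunctional hα hβ (jacobiP α β n * f) = 0 :=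
      (isOrthogonalPolynomial_jacobiP hα hβ n).apply_eq_zero f hf
    rw [sobolevForm, eval_one_iterate_derivative_sobQ hα hβ j hMs, sobQ, sub_mul, map_sub, hP,
      mul_assoc, ← smul_eq_C_mul, map_smul, hker, smul_eq_mul]
    ring

end JacobiSobolev

section LargestZero

variable {α β : ℝ} {j n : ℕ} {Ms : ℕ → ℝ}

lemma one_sub_le_isGreatest_node (hα : -1 < α) (hβ : -1 < β) (hn : 1 ≤ n) {S : Finset ℝ} {c : ℝ}
    (hS : ↑S ⊆ Set.Ioo (-1 : ℝ) 1) (hc : IsGreatest (S : Set ℝ) c)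
    (hPS : jacobiP α β n = C (jacobiP α β n).leadingCoeff * Lagrange.nodal S id) :
    1 - 2 * (α + 1) / (n + α + β + 1) ≤ c := by
  have hn' : (1 : ℝ) ≤ n := Nat.one_le_cast.2 hn
  have hcard : S.card = n := by
    rw [← natDegree_jacobiP hα hβ n, hPS, natDegree_C_mul (leadingCoeff_jacobiP_pos hα hβ n).ne',
      Lagrange.natDegree_nodal]
  have hP1 : 0 < (jacobiP α β n).eval 1 :=
    eval_one_iterate_derivative_jacobiP_pos hα hβ (Nat.zero_le n)
  have hbound : (1 - c) * (derivative (jacobiP α β n)).eval 1 ≤ n * (jacobiP α β n).eval 1 := by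
    have hnodal := mul_eval_iterate_derivative_nodal_le (s := S) (v := id) (x := 1)
      (sub_nonneg.2 (hS hc.1).2.le) (fun t ht => by simpa using hc.2 ht) 0
    rw [hcard, Nat.cast_zero, sub_zero] at hnodal
    rw [hPS, derivative_C_mul, eval_C_mul, eval_C_mul, mul_left_comm, mul_left_comm (n : ℝ)]
    exact mul_le_mul_of_nonneg_left hnodal (leadingCoeff_jacobiP_pos hα hβ n).le
  have hode := two_mul_eval_one_derivative_jacobiP hα hβ n
  rw [sub_le_comm, le_div_iff₀ (by linarith)]
  refine le_of_mul_le_mul_right ?_ (mul_pos (zero_lt_one.trans_le hn') hP1)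
  calc (1 - c) * (n + α + β + 1) * (n * (jacobiP α β n).eval 1)
    _ = 2 * (α + 1) * ((1 - c) * (derivative (jacobiP α β n)).eval 1) := by
      linear_combination -(1 - c) * hode
    _ ≤ 2 * (α + 1) * (n * (jacobiP α β n).eval 1) :=
      mul_le_mul_of_nonneg_left hbound (by linarith)

lemma exists_isRoot_sobQ_ge (hα : -1 < α) (hβ : -1 < β) (hn : 1 ≤ n) (hjn : j ≤ n)
    (hMs : 0 ≤ Ms n) :
    ∃ z, 1 - 2 * (α + 1) / (n + α + β + 1) ≤ z ∧ (sobQ α β j Ms n).IsRoot z := by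
  have hQ := isOrthogonalPolynomial_sobQ hα hβ j hn hMs
  obtain ⟨S, hS, hcard, hPS⟩ := exists_nodal_jacobiP hα hβ n
  have hSne : S.Nonempty := Finset.card_pos.1 (by omega)
  obtain ⟨c, hc⟩ : ∃ c, IsGreatest (S : Set ℝ) c := ⟨_, S.isGreatest_max' hSne⟩
  have hneg : (sobQ α β j Ms n).eval c ≤ 0 :=
    eval_isGreatest_node_nonpos (isPositiveOn_jacobiFunctional hα hβ) (fun t ht => (hS ht).2.le) hc
      (isOrthogonalPolynomial_jacobiP hα hβ n) hPS hMs hQ.apply_eq_zero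
      (eval_one_iterate_derivative_sobQ_pos hα hβ hjn hMs).le
      (degree_sobQ_sub_jacobiP_lt hα hβ j Ms hn)
  have hdeg : 0 < (sobQ α β j Ms n).degree :=
    natDegree_pos_iff_degree_pos.1 (hn.trans_eq hQ.natDegree_eq.symm)
  obtain ⟨z, hz, hroot⟩ := exists_isRoot_ge_of_eval_nonpos hdeg hQ.leadingCoeff_pos.le hneg
  exact ⟨z, (one_sub_le_isGreatest_node hα hβ hn hS hc hPS).trans hz, hroot⟩

lemma isRoot_sobQ_le (hα : -1 < α) (hβ : -1 < β) (hjn : j < n) (hMs : 0 ≤ Ms n) {z : ℝ}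
    (hz : (sobQ α β j Ms n).IsRoot z) : z ≤ 1 + j * (1 - -1) / (n - j) :=
  (isOrthogonalPolynomial_sobQ hα hβ j (Nat.one_le_of_lt hjn) hMs).root_le
    (isPositiveOn_jacobiFunctional hα hβ) (by norm_num) hjn
    (eval_one_iterate_derivative_sobQ_pos hα hβ hjn.le hMs) hz

end LargestZero

theorem sobQ_largest_zero_tendsto_one_general {α β : ℝ} (hα : -1 < α) (hβ : -1 < β) (j : ℕ)
    (Ms : ℕ → ℝ) (hMs : ∀ᶠ n in atTop, 0 ≤ Ms n) (y : ℕ → ℝ)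
    (hy : ∀ᶠ n in atTop, IsGreatest {x : ℝ | (sobQ α β j Ms n).eval x = 0} (y n)) :
    Tendsto y atTop (nhds 1) := by
  have hlower : Tendsto (fun n : ℕ => 1 - 2 * (α + 1) / (n + α + β + 1)) atTop (nhds 1) := by
    have hden : Tendsto (fun n : ℕ => (n + α + β + 1 : ℝ)) atTop atTop := by
      simpa only [add_assoc] using
        tendsto_atTop_add_const_right _ _ (tendsto_natCast_atTop_atTop (R := ℝ))
    simpa using tendsto_const_nhds.sub (tendsto_const_nhds.div_atTop hden)
  have hupper : Tendsto (fun n : ℕ => 1 + j * (1 - -1) / (n - j : ℝ)) atTop (nhds 1) := by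
    have hden : Tendsto (fun n : ℕ => (n - j : ℝ)) atTop atTop :=
      tendsto_atTop_add_const_right _ _ tendsto_natCast_atTop_atTop
    simpa using tendsto_const_nhds.add (tendsto_const_nhds.div_atTop hden)
  refine tendsto_of_tendsto_of_tendsto_of_le_of_le' hlower hupper ?_ ?_
  · filter_upwards [hMs, hy, eventually_gt_atTop j] with n hMs hy hjn
    obtain ⟨z, hz, hroot⟩ := exists_isRoot_sobQ_ge hα hβ (Nat.one_le_of_lt hjn) hjn.le hMs
    exact hz.trans (hy.2 hroot)
  · filter_upwards [hMs, hy, eventually_gt_atTop j] with n hMs hy hjn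
    exact isRoot_sobQ_le hα hβ hjn hMs hy.1

/-- for `γ < 2(α+2j+1)`, the largest real zero of `Q_n` tends to 1. -/
theorem sobQ_largest_zero_tendsto_one (α β : ℝ) (hα : -1 < α) (hβ : -1 < β) (j : ℕ)
    (hj : 1 ≤ j) (γ M : ℝ) (hM : 0 < M) (Ms : ℕ → ℝ) (hMs : ∀ n, 0 ≤ Ms n)
    (hlim : Filter.Tendsto (fun n : ℕ => Ms n * (n : ℝ) ^ γ) Filter.atTop (nhds M))
    (hγ : γ < 2 * (α + 2 * j + 1)) (y : ℕ → ℝ)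
    (hy : ∀ n, 1 ≤ n → IsGreatest {x : ℝ | (sobQ α β j Ms n).eval x = 0} (y n)) :
    Filter.Tendsto y Filter.atTop (nhds 1) :=
  sobQ_largest_zero_tendsto_one_general hα hβ j Ms (.of_forall hMs) y
    (eventually_atTop.2 ⟨1, hy⟩)
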